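/- For every k∈{1,…,K} and for either choice of sign: lim_{ρ→0⁺} (1/α(ρ))·ψ_ρ( (α(ρ)/ρ) · 2(1 ± |ln ρ|^{-1/4})/(γv_k²) ) = E[X²·1{|X|≥v_k}]/(γv_k²) − ℙ(|X|≥v_k)/γ. -/

import Mathlib

open MeasureTheory ProbabilityTheory Real

noncomputable section

namespace DiscretePrior

/-- Standard Gaussian measure on ℝ. -/
def stdG : Measure ℝ := gaussianReal 0 1

/-- The sparse prior (1−ρ)δ₀ + ρ P₀. -/
def sparsePrior (ρ : ℝ) (P0 : Measure ℝ) : Measure ℝ :=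
  ENNReal.ofReal (1 - ρ) • Measure.dirac 0 + ENNReal.ofReal ρ • P0

/-- E[X² 1(|X| ≥ v)]. -/
def truncSMge (P : Measure ℝ) (v : ℝ) : ℝ := ∫ x, if v ≤ |x| then x ^ 2 else 0 ∂P

/-- P(|X| ≥ v). -/
def tailProb (P : Measure ℝ) (v : ℝ) : ℝ := (P {x | v ≤ |x|}).toReal

/-- ψ_ρ(r) = E[ln ∫ exp(r X* x + √r Z x − r x²/2) dP_{0,ρ}(x)]. -/
def psiD (P0 : Measure ℝ) (ρ r : ℝ) : ℝ :=
  ∫ xs, ∫ z,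
    Real.log (∫ x, Real.exp (r * xs * x + Real.sqrt r * z * x - r * x ^ 2 / 2)
      ∂(sparsePrior ρ P0)) ∂stdG ∂(sparsePrior ρ P0)

lemma integral_eq_finset_sum {P : Measure ℝ} [IsFiniteMeasure P] {S : Finset ℝ}
    (hS : ∀ᵐ x ∂P, x ∈ S) (f : ℝ → ℝ) : ∫ x, f x ∂P = ∑ x ∈ S, P.real {x} * f x := by
  have h := setIntegral_finset (μ := P) S (f := f) IntegrableOn.finset
  rwa [Measure.restrict_eq_self_of_ae_mem hS] at h

lemma integral_sparsePrior {P : Measure ℝ} [IsFiniteMeasure P] {S : Finset ℝ}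
    (hS : ∀ᵐ x ∂P, x ∈ S) {ρ : ℝ} (h0 : 0 ≤ ρ) (h1 : ρ ≤ 1) (f : ℝ → ℝ) :
    ∫ x, f x ∂(sparsePrior ρ P) = (1 - ρ) * f 0 + ρ * ∑ x ∈ S, P.real {x} * f x := by
  have hP : Integrable f P := by
    have h : IntegrableOn f S P := IntegrableOn.finset
    rwa [IntegrableOn, Measure.restrict_eq_self_of_ae_mem hS] at h
  rw [sparsePrior, integral_add_measure
    ((integrable_dirac (by simp)).smul_measure ENNReal.ofReal_ne_top)
    (hP.smul_measure ENNReal.ofReal_ne_top), integral_smul_measure, integral_smul_measure,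
    integral_dirac, integral_eq_finset_sum hS, ENNReal.toReal_ofReal h0,
    ENNReal.toReal_ofReal (sub_nonneg.2 h1), smul_eq_mul, smul_eq_mul]

/-- The likelihood ratio `∫ exp(r x* x + √r z x − r x²/2) dP_{0,ρ}(x)` for a prior `P₀` with
weights `p` on the finite set `S`. -/
def evidence (S : Finset ℝ) (p : ℝ → ℝ) (ρ r xs z : ℝ) : ℝ :=
  (1 - ρ) + ρ * ∑ x ∈ S, p x * rexp (r * xs * x + √r * z * x - r * x ^ 2 / 2)

/-- The Gaussian average of the logarithm of the likelihood ratio at signal value `xs`. -/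
def logEvidence (S : Finset ℝ) (p : ℝ → ℝ) (ρ r xs : ℝ) : ℝ :=
  ∫ z, log (evidence S p ρ r xs z) ∂stdG

lemma psiD_eq_logEvidence {P : Measure ℝ} [IsFiniteMeasure P] {S : Finset ℝ}
    (hS : ∀ᵐ x ∂P, x ∈ S) {ρ : ℝ} (h0 : 0 ≤ ρ) (h1 : ρ ≤ 1) (r : ℝ) :
    psiD P ρ r = (1 - ρ) * logEvidence S (fun x ↦ P.real {x}) ρ r 0 +
      ρ * ∑ x ∈ S, P.real {x} * logEvidence S (fun x ↦ P.real {x}) ρ r x := by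
  simp only [psiD, integral_sparsePrior hS h0 h1, logEvidence, evidence]
  simp

instance : IsProbabilityMeasure stdG := inferInstanceAs (IsProbabilityMeasure (gaussianReal 0 1))

lemma integrable_id_stdG : Integrable (fun z : ℝ ↦ z) stdG :=
  (memLp_id_gaussianReal 1).integrable (by simp)

lemma integral_id_stdG : ∫ z, z ∂stdG = 0 := integral_id_gaussianReal

lemma integrable_exp_mul_stdG (t : ℝ) : Integrable (fun z ↦ rexp (t * z)) stdG :=
  integrable_exp_mul_gaussianReal t

lemma integral_exp_mul_stdG (t : ℝ) : ∫ z, rexp (t * z) ∂stdG = rexp (t ^ 2 / 2) := by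
  have h := congrFun (mgf_fun_id_gaussianReal (μ := 0) (v := 1)) t
  simpa [mgf, stdG] using h

section Bounds

variable {S : Finset ℝ} {p : ℝ → ℝ} {M ρ r : ℝ}

lemma one_sub_le_evidence (hp : ∀ x ∈ S, 0 ≤ p x) (h0 : 0 < ρ) (xs z : ℝ) :
    1 - ρ ≤ evidence S p ρ r xs z := by
  have h : 0 ≤ ∑ x ∈ S, p x * rexp (r * xs * x + √r * z * x - r * x ^ 2 / 2) :=
    Finset.sum_nonneg fun x hx ↦ mul_nonneg (hp x hx) (exp_pos _).le
  have := mul_nonneg h0.le h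
  unfold evidence
  linarith

lemma log_evidence_le (hp : ∀ x ∈ S, 0 ≤ p x) (hp1 : ∑ x ∈ S, p x = 1) (hM : ∀ x ∈ S, |x| ≤ M)
    (h0 : 0 < ρ) (h1 : ρ < 1) (hr : 0 ≤ r) (xs z : ℝ) :
    log (evidence S p ρ r xs z) ≤
      log 2 + max (r * xs ^ 2 / 2 + log ρ) 0 + √r * M * |z| := by
  have hM0 : 0 ≤ M := by
    have hne : S.Nonempty := by
      by_contra h
      simp [Finset.not_nonempty_iff_eq_empty.1 h] at hp1
    obtain ⟨x, hx⟩ := hne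
    exact (abs_nonneg x).trans (hM x hx)
  have hb : 0 ≤ √r * M * |z| := by positivity
  have hsum : ∑ x ∈ S, p x * rexp (r * xs * x + √r * z * x - r * x ^ 2 / 2) ≤
      rexp (r * xs ^ 2 / 2 + √r * M * |z|) := by
    calc _ ≤ ∑ x ∈ S, p x * rexp (r * xs ^ 2 / 2 + √r * M * |z|) := by
          refine Finset.sum_le_sum fun x hx ↦ mul_le_mul_of_nonneg_left ?_ (hp x hx)
          refine exp_le_exp.2 ?_
          have h2 : √r * z * x ≤ √r * M * |z| := by
            rw [mul_assoc, mul_assoc]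
            refine mul_le_mul_of_nonneg_left ?_ (sqrt_nonneg r)
            calc z * x ≤ |z * x| := le_abs_self _
              _ = |x| * |z| := by rw [abs_mul, mul_comm]
              _ ≤ M * |z| := mul_le_mul_of_nonneg_right (hM x hx) (abs_nonneg z)
          nlinarith [mul_nonneg hr (sq_nonneg (xs - x))]
      _ = _ := by rw [← Finset.sum_mul, hp1, one_mul]
  have hpos : 0 < evidence S p ρ r xs z :=
    (sub_pos.2 h1).trans_le (one_sub_le_evidence hp h0 xs z)
  rw [log_le_iff_le_exp hpos, exp_add, exp_add, exp_log two_pos]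
  have hA : 1 ≤ rexp (max (r * xs ^ 2 / 2 + log ρ) 0) := one_le_exp (le_max_right _ _)
  have hB : ρ * rexp (r * xs ^ 2 / 2) ≤ rexp (max (r * xs ^ 2 / 2 + log ρ) 0) := by
    calc _ = rexp (r * xs ^ 2 / 2 + log ρ) := by rw [exp_add, exp_log h0, mul_comm]
      _ ≤ _ := exp_le_exp.2 (le_max_left _ _)
  have hC : 1 ≤ rexp (√r * M * |z|) := one_le_exp hb
  have hD := mul_le_mul_of_nonneg_left hsum h0.le
  rw [exp_add, ← mul_assoc] at hD
  have hE := mul_le_mul_of_nonneg_right hB (exp_pos (√r * M * |z|)).le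
  have hF := one_le_mul_of_one_le_of_one_le hA hC
  unfold evidence
  linarith

lemma le_log_evidence_self (hp : ∀ x ∈ S, 0 ≤ p x) (h0 : 0 < ρ) (h1 : ρ < 1) {x : ℝ}
    (hx : x ∈ S) (hpx : 0 < p x) (z : ℝ) :
    log ρ + log (p x) + r * x ^ 2 / 2 + √r * x * z ≤ log (evidence S p ρ r x z) := by
  have hpos : 0 < evidence S p ρ r x z :=
    (sub_pos.2 h1).trans_le (one_sub_le_evidence hp h0 x z)
  rw [le_log_iff_exp_le hpos, add_assoc (log ρ + log (p x)), exp_add, exp_add, exp_log h0,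
    exp_log hpx, mul_assoc]
  have h := Finset.single_le_sum
    (f := fun y ↦ p y * rexp (r * x * y + √r * z * y - r * y ^ 2 / 2))
    (fun y hy ↦ mul_nonneg (hp y hy) (exp_pos _).le) hx
  have h2 := mul_le_mul_of_nonneg_left h h0.le
  have h3 : r * x ^ 2 / 2 + √r * x * z = r * x * x + √r * z * x - r * x ^ 2 / 2 := by ring
  rw [h3]
  unfold evidence
  linarith

lemma integrable_log_evidence (hp : ∀ x ∈ S, 0 ≤ p x) (hp1 : ∑ x ∈ S, p x = 1)
    (hM : ∀ x ∈ S, |x| ≤ M) (h0 : 0 < ρ) (h1 : ρ < 1) (hr : 0 ≤ r) (xs : ℝ) :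
    Integrable (fun z ↦ log (evidence S p ρ r xs z)) stdG := by
  have hmeas : Measurable fun z ↦ log (evidence S p ρ r xs z) := by
    unfold evidence
    fun_prop
  refine integrable_of_le_of_le hmeas.aestronglyMeasurable
    (Filter.Eventually.of_forall fun z ↦
      log_le_log (sub_pos.2 h1) (one_sub_le_evidence hp h0 xs z))
    (Filter.Eventually.of_forall fun z ↦ log_evidence_le hp hp1 hM h0 h1 hr xs z)
    (integrable_const _) ((integrable_const _).add (integrable_id_stdG.abs.const_mul _))

lemma log_one_sub_le_logEvidence (hp : ∀ x ∈ S, 0 ≤ p x) (hp1 : ∑ x ∈ S, p x = 1)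
    (hM : ∀ x ∈ S, |x| ≤ M) (h0 : 0 < ρ) (h1 : ρ < 1) (hr : 0 ≤ r) (xs : ℝ) :
    log (1 - ρ) ≤ logEvidence S p ρ r xs := by
  calc log (1 - ρ) = ∫ _, log (1 - ρ) ∂stdG := by simp
    _ ≤ _ := integral_mono (integrable_const _) (integrable_log_evidence hp hp1 hM h0 h1 hr xs)
      fun z ↦ log_le_log (sub_pos.2 h1) (one_sub_le_evidence hp h0 xs z)

lemma logEvidence_le (hp : ∀ x ∈ S, 0 ≤ p x) (hp1 : ∑ x ∈ S, p x = 1)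
    (hM : ∀ x ∈ S, |x| ≤ M) (h0 : 0 < ρ) (h1 : ρ < 1) (hr : 0 ≤ r) (xs : ℝ) :
    logEvidence S p ρ r xs ≤
      log 2 + max (r * xs ^ 2 / 2 + log ρ) 0 + √r * M * ∫ z, |z| ∂stdG := by
  have hi : Integrable (fun z : ℝ ↦ √r * M * |z|) stdG := integrable_id_stdG.abs.const_mul _
  calc _ ≤ ∫ z, (log 2 + max (r * xs ^ 2 / 2 + log ρ) 0 + √r * M * |z|) ∂stdG :=
        integral_mono (integrable_log_evidence hp hp1 hM h0 h1 hr xs)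
          ((integrable_const _).add hi) fun z ↦ log_evidence_le hp hp1 hM h0 h1 hr xs z
    _ = _ := by rw [integral_add (integrable_const _) hi, integral_const_mul]; simp

lemma le_logEvidence_self (hp : ∀ x ∈ S, 0 ≤ p x) (hp1 : ∑ x ∈ S, p x = 1)
    (hM : ∀ x ∈ S, |x| ≤ M) (h0 : 0 < ρ) (h1 : ρ < 1) (hr : 0 ≤ r) {x : ℝ}
    (hx : x ∈ S) (hpx : 0 < p x) :
    log ρ + log (p x) + r * x ^ 2 / 2 ≤ logEvidence S p ρ r x := by
  have hi : Integrable (fun z : ℝ ↦ √r * x * z) stdG := integrable_id_stdG.const_mul _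
  calc log ρ + log (p x) + r * x ^ 2 / 2
      = ∫ z, (log ρ + log (p x) + r * x ^ 2 / 2 + √r * x * z) ∂stdG := by
        rw [integral_add (integrable_const _) hi, integral_const_mul, integral_id_stdG]; simp
    _ ≤ _ := integral_mono ((integrable_const _).add hi)
      (integrable_log_evidence hp hp1 hM h0 h1 hr x)
      fun z ↦ le_log_evidence_self hp h0 h1 hx hpx z

lemma logEvidence_zero_nonpos (hp : ∀ x ∈ S, 0 ≤ p x) (hp1 : ∑ x ∈ S, p x = 1)
    (hM : ∀ x ∈ S, |x| ≤ M) (h0 : 0 < ρ) (h1 : ρ < 1) (hr : 0 ≤ r) :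
    logEvidence S p ρ r 0 ≤ 0 := by
  have heq : ∀ z, evidence S p ρ r 0 z - 1 =
      -ρ + ∑ x ∈ S, ρ * p x * rexp (-(r * x ^ 2 / 2)) * rexp (√r * x * z) := fun z ↦ by
    have : ∀ x, r * 0 * x + √r * z * x - r * x ^ 2 / 2 = -(r * x ^ 2 / 2) + √r * x * z :=
      fun x ↦ by ring
    simp only [evidence, this, exp_add, Finset.mul_sum, ← mul_assoc]
    ring
  have hterm : ∀ x ∈ S, Integrable
      (fun z ↦ ρ * p x * rexp (-(r * x ^ 2 / 2)) * rexp (√r * x * z)) stdG :=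
    fun x _ ↦ (integrable_exp_mul_stdG _).const_mul _
  have hsum := integrable_finsetSum S hterm
  have hint : ∫ z, (evidence S p ρ r 0 z - 1) ∂stdG = 0 := by
    simp only [heq]
    rw [integral_add (integrable_const _) hsum, integral_finsetSum S hterm]
    have : ∀ x, rexp (-(r * x ^ 2 / 2)) * rexp ((√r * x) ^ 2 / 2) = 1 := fun x ↦ by
      rw [← exp_add, mul_pow, sq_sqrt hr, neg_add_cancel, exp_zero]
    simp only [integral_const_mul, integral_exp_mul_stdG]
    simp only [mul_assoc, this, mul_one, ← Finset.mul_sum, hp1]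
    simp
  refine le_of_le_of_eq (integral_mono (integrable_log_evidence hp hp1 hM h0 h1 hr 0) ?_ fun z ↦
    log_le_sub_one_of_pos ((sub_pos.2 h1).trans_le (one_sub_le_evidence hp h0 0 z))) hint
  simp only [heq]
  exact (integrable_const _).add hsum

end Bounds

section Limits

open Filter Topology

lemma tendsto_abs_log_nhdsGT_zero : Tendsto (fun ρ : ℝ ↦ |log ρ|) (𝓝[>] 0) atTop :=
  tendsto_abs_atBot_atTop.comp tendsto_log_nhdsGT_zero

lemma eventually_mem_Ioo_nhdsGT_zero : ∀ᶠ ρ : ℝ in 𝓝[>] 0, ρ ∈ Set.Ioo (0 : ℝ) 1 :=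
  Ioo_mem_nhdsGT one_pos

variable {S : Finset ℝ} {p r : ℝ → ℝ} {c : ℝ}

lemma tendsto_logEvidence_zero_div (hp : ∀ x ∈ S, 0 ≤ p x) (hp1 : ∑ x ∈ S, p x = 1)
    (hr : ∀ᶠ ρ in 𝓝[>] 0, 0 ≤ r ρ) :
    Tendsto (fun ρ ↦ logEvidence S p ρ (r ρ) 0 / (ρ * |log ρ|)) (𝓝[>] 0) (𝓝 0) := by
  obtain ⟨M, hM⟩ : ∃ M, ∀ x ∈ S, |x| ≤ M := (S.image abs).bddAbove.imp fun M hM x hx ↦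
    hM (by simpa using ⟨x, hx, rfl⟩)
  have hlow : Tendsto (fun ρ : ℝ ↦ -2 / |log ρ|) (𝓝[>] 0) (𝓝 0) :=
    tendsto_const_nhds.div_atTop tendsto_abs_log_nhdsGT_zero
  refine tendsto_of_tendsto_of_tendsto_of_le_of_le' hlow tendsto_const_nhds ?_ ?_
  · filter_upwards [hr, eventually_mem_Ioo_nhdsGT_zero,
      Ioo_mem_nhdsGT (show (0 : ℝ) < 1 / 2 by norm_num)] with ρ hr hρ hρ2
    have hL : 0 < |log ρ| := abs_pos.2 (log_neg hρ.1 hρ.2).ne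
    have h1 := log_one_sub_le_logEvidence hp hp1 hM hρ.1 hρ.2 hr 0
    have h2 := one_sub_inv_le_log_of_pos (sub_pos.2 hρ.2)
    have h3 : -2 * ρ ≤ 1 - (1 - ρ)⁻¹ := by
      have h4 : (1 - ρ)⁻¹ ≤ 1 + 2 * ρ := by
        rw [inv_le_iff_one_le_mul₀ (sub_pos.2 hρ.2)]
        nlinarith [hρ.1, hρ2.2]
      linarith
    rw [le_div_iff₀ (mul_pos hρ.1 hL)]
    calc -2 / |log ρ| * (ρ * |log ρ|) = -2 * ρ := by field_simp
      _ ≤ _ := by linarith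
  · filter_upwards [hr, eventually_mem_Ioo_nhdsGT_zero] with ρ hr hρ
    exact div_nonpos_of_nonpos_of_nonneg
      (logEvidence_zero_nonpos hp hp1 hM hρ.1 hρ.2 hr) (mul_nonneg hρ.1.le (abs_nonneg _))

lemma tendsto_logEvidence_div (hp : ∀ x ∈ S, 0 ≤ p x) (hp1 : ∑ x ∈ S, p x = 1)
    (hr : ∀ᶠ ρ in 𝓝[>] 0, 0 ≤ r ρ) (hc : Tendsto (fun ρ ↦ r ρ / |log ρ|) (𝓝[>] 0) (𝓝 c))
    {x : ℝ} (hx : x ∈ S) (hpx : 0 < p x) :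
    Tendsto (fun ρ ↦ logEvidence S p ρ (r ρ) x / |log ρ|) (𝓝[>] 0)
      (𝓝 (max (c * x ^ 2 / 2 - 1) 0)) := by
  obtain ⟨M, hM⟩ : ∃ M, ∀ x ∈ S, |x| ≤ M := (S.image abs).bddAbove.imp fun M hM x hx ↦
    hM (by simpa using ⟨x, hx, rfl⟩)
  have hdiv (a : ℝ) : Tendsto (fun ρ : ℝ ↦ a / |log ρ|) (𝓝[>] 0) (𝓝 0) :=
    tendsto_const_nhds.div_atTop tendsto_abs_log_nhdsGT_zero
  have hlin : Tendsto (fun ρ ↦ r ρ / |log ρ| * x ^ 2 / 2 - 1) (𝓝[>] 0)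
      (𝓝 (c * x ^ 2 / 2 - 1)) := ((hc.mul_const _).div_const _).sub_const _
  have hlog : Tendsto (fun ρ : ℝ ↦ log (1 - ρ) / |log ρ|) (𝓝[>] 0) (𝓝 0) := by
    refine Tendsto.div_atTop (a := 0) ?_ tendsto_abs_log_nhdsGT_zero
    have : ContinuousAt (fun ρ : ℝ ↦ log (1 - ρ)) 0 :=
      ContinuousAt.log (by fun_prop) (by simp)
    simpa using this.tendsto.mono_left nhdsWithin_le_nhds
  have hsqrt : Tendsto (fun ρ ↦ √(r ρ) / |log ρ|) (𝓝[>] 0) (𝓝 0) := by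
    have h := (hc.mul (hdiv 1)).sqrt
    rw [mul_zero, sqrt_zero] at h
    refine h.congr fun ρ ↦ ?_
    rw [div_mul_div_comm, mul_one, sqrt_div' _ (by positivity), sqrt_mul_self (abs_nonneg _)]
  have hlow : Tendsto (fun ρ ↦ max (r ρ / |log ρ| * x ^ 2 / 2 - 1 + log (p x) / |log ρ|)
      (log (1 - ρ) / |log ρ|)) (𝓝[>] 0) (𝓝 (max (c * x ^ 2 / 2 - 1) 0)) := by
    simpa using (hlin.add (hdiv (log (p x)))).max hlog
  have hupp : Tendsto (fun ρ ↦ log 2 / |log ρ| + max (r ρ / |log ρ| * x ^ 2 / 2 - 1) 0 +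
      √(r ρ) / |log ρ| * (M * ∫ z, |z| ∂stdG)) (𝓝[>] 0)
      (𝓝 (max (c * x ^ 2 / 2 - 1) 0)) := by
    simpa using ((hdiv (log 2)).add (hlin.max tendsto_const_nhds)).add
      (hsqrt.mul_const (M * ∫ z, |z| ∂stdG))
  refine tendsto_of_tendsto_of_tendsto_of_le_of_le' hlow hupp ?_ ?_
  · filter_upwards [hr, eventually_mem_Ioo_nhdsGT_zero] with ρ hr hρ
    have hneg := log_neg hρ.1 hρ.2
    have hne := hneg.ne
    have hL : 0 < |log ρ| := abs_pos.2 hne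
    refine max_le ?_ ?_
    · refine le_trans (le_of_eq ?_) (div_le_div_of_nonneg_right
        (le_logEvidence_self hp hp1 hM hρ.1 hρ.2 hr hx hpx) hL.le)
      rw [abs_of_neg hneg]
      field_simp
      ring
    · exact div_le_div_of_nonneg_right
        (log_one_sub_le_logEvidence hp hp1 hM hρ.1 hρ.2 hr x) hL.le
  · filter_upwards [hr, eventually_mem_Ioo_nhdsGT_zero] with ρ hr hρ
    have hneg := log_neg hρ.1 hρ.2
    have hne := hneg.ne
    have hL : 0 < |log ρ| := abs_pos.2 hne
    refine (div_le_div_of_nonneg_right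
      (logEvidence_le hp hp1 hM hρ.1 hρ.2 hr x) hL.le).trans (le_of_eq ?_)
    have hmax : max (r ρ / |log ρ| * x ^ 2 / 2 - 1) 0 =
        max (r ρ * x ^ 2 / 2 + log ρ) 0 / |log ρ| := by
      rw [← max_div_div_right hL.le, zero_div]
      congr 1
      rw [abs_of_neg hneg]
      field_simp
      ring
    rw [hmax]
    ring

/-- If `r ρ ~ c |ln ρ|`, then `ψ_ρ(r ρ) / (ρ |ln ρ|)` tends to `E[(c X² / 2 - 1)₊]`. -/
theorem tendsto_psiD_div {P : Measure ℝ} [IsProbabilityMeasure P] (hS : ∀ᵐ x ∂P, x ∈ S)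
    (hr : ∀ᶠ ρ in 𝓝[>] 0, 0 ≤ r ρ) (hc : Tendsto (fun ρ ↦ r ρ / |log ρ|) (𝓝[>] 0) (𝓝 c)) :
    Tendsto (fun ρ ↦ psiD P ρ (r ρ) / (ρ * |log ρ|)) (𝓝[>] 0)
      (𝓝 (∫ x, max (c * x ^ 2 / 2 - 1) 0 ∂P)) := by
  have hp : ∀ x ∈ S, 0 ≤ P.real {x} := fun _ _ ↦ measureReal_nonneg
  have hp1 : ∑ x ∈ S, P.real {x} = 1 := by
    simpa using (integral_eq_finset_sum hS fun _ ↦ (1 : ℝ)).symm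
  have hsum : Tendsto (fun ρ ↦ ∑ x ∈ S, P.real {x} *
      (logEvidence S (fun x ↦ P.real {x}) ρ (r ρ) x / |log ρ|)) (𝓝[>] 0)
      (𝓝 (∑ x ∈ S, P.real {x} * max (c * x ^ 2 / 2 - 1) 0)) := by
    refine tendsto_finsetSum S fun x hx ↦ ?_
    rcases (hp x hx).eq_or_lt with h | h
    · simp [← h]
    · exact (tendsto_logEvidence_div hp hp1 hr hc hx h).const_mul _
  have hone : Tendsto (fun ρ : ℝ ↦ 1 - ρ) (𝓝[>] 0) (𝓝 (1 - 0)) :=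
    (tendsto_const_nhds.sub tendsto_id).mono_left nhdsWithin_le_nhds
  have h := (hone.mul (tendsto_logEvidence_zero_div hp hp1 hr)).add hsum
  rw [mul_zero, zero_add] at h
  rw [integral_eq_finset_sum hS]
  refine h.congr' ?_
  filter_upwards [eventually_mem_Ioo_nhdsGT_zero] with ρ hρ
  have hρ0 := hρ.1.ne'
  have hL : |log ρ| ≠ 0 := abs_ne_zero.2 (log_neg hρ.1 hρ.2).ne
  simp only [psiD_eq_logEvidence hS hρ.1.le hρ.2.le, mul_div_assoc', ← Finset.sum_div]
  field_simp

end Limits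

lemma integral_max_sub_one {P : Measure ℝ} [IsProbabilityMeasure P] {S : Finset ℝ}
    (hS : ∀ᵐ x ∂P, x ∈ S) {v : ℝ} (hv : 0 < v) :
    ∫ x, max (2 / v ^ 2 * x ^ 2 / 2 - 1) 0 ∂P = truncSMge P v / v ^ 2 - tailProb P v := by
  have htail : tailProb P v = ∫ x, (if v ≤ |x| then (1 : ℝ) else 0) ∂P := by
    have hm : MeasurableSet {x : ℝ | v ≤ |x|} := measurableSet_le measurable_const (by fun_prop)
    have h := integral_indicator_one (μ := P) hm
    rw [tailProb, ← Measure.real, ← h]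
    rfl
  rw [truncSMge, htail]
  simp only [integral_eq_finset_sum hS]
  rw [Finset.sum_div, ← Finset.sum_sub_distrib]
  refine Finset.sum_congr rfl fun x _ ↦ ?_
  split_ifs with h
  · have : v ^ 2 ≤ x ^ 2 := sq_le_sq.2 (by rwa [abs_of_pos hv])
    rw [max_eq_left]
    · field_simp
    · rw [sub_nonneg, show 2 / v ^ 2 * x ^ 2 / 2 = x ^ 2 / v ^ 2 by ring,
        one_le_div (by positivity)]
      exact this
  · have : x ^ 2 ≤ v ^ 2 := sq_le_sq.2 (by rw [abs_of_pos hv]; exact (not_le.1 h).le)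
    rw [max_eq_right]
    · simp
    · rw [sub_nonpos, show 2 / v ^ 2 * x ^ 2 / 2 = x ^ 2 / v ^ 2 by ring,
        div_le_one (by positivity)]
      exact this

/-- Lemma 8 of the paper: limit as ρ → 0⁺ of
(1/α(ρ)) ψ_ρ((α(ρ)/ρ) · 2(1 ± |ln ρ|^{-1/4})/(γ v_k²)), with α(ρ) = γρ|ln ρ|. -/
theorem limit_psi_at_maximizer
    (γ : ℝ) (hγ : 0 < γ)
    (K : ℕ) (hK : 0 < K) (v : Fin K → ℝ) (hvpos : 0 < v ⟨0, hK⟩) (hvmono : StrictMono v)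
    (P0 : Measure ℝ) [IsProbabilityMeasure P0]
    (hsupp : ∀ᵐ x ∂P0, ∃ k : Fin K, x = v k ∨ x = -(v k)) :
    ∀ k : Fin K, ∀ σ : ℝ, σ = 1 ∨ σ = -1 →
      Filter.Tendsto
        (fun ρ : ℝ =>
          psiD P0 ρ (γ * |Real.log ρ| *
              (2 * (1 + σ * |Real.log ρ| ^ (-(1 : ℝ) / 4)) / (γ * v k ^ 2)))
            / (γ * ρ * |Real.log ρ|))
        (nhdsWithin 0 (Set.Ioi 0))
        (nhds (truncSMge P0 (v k) / (γ * v k ^ 2) - tailProb P0 (v k) / γ)) := by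
  open Filter Topology in
  intro k σ _
  have hv : 0 < v k := hvpos.trans_le (hvmono.monotone (Nat.zero_le k.val))
  classical
  have hS : ∀ᵐ x ∂P0, x ∈ Finset.univ.image v ∪ Finset.univ.image fun j ↦ -v j := by
    filter_upwards [hsupp] with x hx
    obtain ⟨j, rfl | rfl⟩ := hx <;> simp
  have hpow : Tendsto (fun ρ : ℝ ↦ |log ρ| ^ (-(1 : ℝ) / 4)) (𝓝[>] 0) (𝓝 0) := by
    simpa only [neg_div, Function.comp_def] using
      (tendsto_rpow_neg_atTop (show (0 : ℝ) < 1 / 4 by norm_num)).comp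
        tendsto_abs_log_nhdsGT_zero
  have hfac : Tendsto (fun ρ : ℝ ↦ 1 + σ * |log ρ| ^ (-(1 : ℝ) / 4)) (𝓝[>] 0) (𝓝 1) := by
    simpa using (hpow.const_mul σ).const_add 1
  have hc : Tendsto (fun ρ : ℝ ↦ γ * |log ρ| *
      (2 * (1 + σ * |log ρ| ^ (-(1 : ℝ) / 4)) / (γ * v k ^ 2)) / |log ρ|) (𝓝[>] 0)
      (𝓝 (2 / v k ^ 2)) := by
    have h := hfac.const_mul (2 / v k ^ 2)
    rw [mul_one] at h
    refine h.congr' ?_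
    filter_upwards [eventually_mem_Ioo_nhdsGT_zero] with ρ hρ
    have hL : |log ρ| ≠ 0 := abs_ne_zero.2 (log_neg hρ.1 hρ.2).ne
    field_simp
  have hr : ∀ᶠ ρ : ℝ in 𝓝[>] 0, 0 ≤ γ * |log ρ| *
      (2 * (1 + σ * |log ρ| ^ (-(1 : ℝ) / 4)) / (γ * v k ^ 2)) := by
    filter_upwards [hfac.eventually_const_lt one_pos] with ρ hρ
    positivity
  have h := (tendsto_psiD_div hS hr hc).div_const γ
  rw [integral_max_sub_one hS hv, sub_div, div_div, mul_comm (v k ^ 2) γ] at h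
  refine h.congr fun ρ ↦ ?_
  rw [div_div]
  congr 1
  ring

end DiscretePrior
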